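/- Let C ⊆ A be a nonempty set, and let f be Lipschitz continuous, with Lipschitz constant L, on an open set V containing C. Write (C × P)_inf = ((C × P) ∩ dom φ) \ (Ω × {p₀}). Suppose there exists a > 0 such that φ(·,p)^↓_A(x) ≤ −a for every (x,p) ∈ (C × P)_inf with φ(x,·)^↓(p) ≥ 0. Then the parametric penalty function F_λ is feasibility-preserving on C, and λ_fp(C) ≤ L/a. -/

import Mathlib

/-!
For every `lam > L / a` there is no infeasible point of `C × P` at which `F_lam` is finite and has
nonnegative rate of steepest descent, so every `mu > L / a` is an admissible threshold.

At such a point `(x, p)`, restricting the lower limit to the slice `{x} × P` gives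
`φ(x,·)^↓(p) ≥ 0`, since `f` does not vary there. Hence the hypothesis gives `φ(·,p)^↓_A(x) ≤ -a`.
Restricting to the slice `A × {p}` instead, where `f` grows at most at rate `L` near `x`, gives
`lam * φ(·,p)^↓_A(x) ≥ -L`, that is, `φ(·,p)^↓_A(x) ≥ -L / lam > -a`, a contradiction.
Both restrictions rest on the pointwise estimate `quotient_bound`.
-/

open Filter Set Metric

/-- The rate of steepest descent of `g` with respect to the set `A` at the point `x`. -/
noncomputable def rsd {X : Type*} [MetricSpace X] (A : Set X) (g : X → EReal) (x : X) : EReal :=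
  Filter.liminf (fun y => (g y - g x) * (((dist y x)⁻¹ : ℝ) : EReal)) (nhdsWithin x (A \ {x}))

/-- The rate of steepest descent of `F` with respect to a set `B` of pairs at the point `z`,
where `X × P` carries the sum metric `d((x₁,p₁),(x₂,p₂)) = d(x₁,x₂) + d(p₁,p₂)` (whose
topology is the product topology). -/
noncomputable def rsdPair {X P : Type*} [MetricSpace X] [MetricSpace P]
    (B : Set (X × P)) (F : X × P → EReal) (z : X × P) : EReal :=
  Filter.liminf
    (fun w => (F w - F z) * (((dist w.1 z.1 + dist w.2 z.2)⁻¹ : ℝ) : EReal))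
    (nhdsWithin z (B \ {z}))

/-- The parametric penalty function `F_λ(x,p) = f(x) + λ φ(x,p)`. -/
noncomputable def penFun {X P : Type*} (f : X → EReal) (φ : X → P → EReal)
    (lam : ℝ) (x : X) (p : P) : EReal :=
  f x + (lam : EReal) * φ x p

/-- `F_λ` is feasibility-preserving on `C ⊆ A` for the parameter threshold `λ₀ ≥ 0`. -/
def FeasPresFrom {X P : Type*} [MetricSpace X] [MetricSpace P]
    (A M C : Set X) (p0 : P) (f : X → EReal) (φ : X → P → EReal) (lam0 : ℝ) : Prop :=
  0 ≤ lam0 ∧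
    ∀ lam : ℝ, lam0 ≤ lam →
      ∀ x ∈ C, ∀ p : P,
        penFun f φ lam x p ≠ ⊤ → penFun f φ lam x p ≠ ⊥ →
        0 ≤ rsdPair (A ×ˢ (univ : Set P)) (fun z => penFun f φ lam z.1 z.2) (x, p) →
        (x ∈ M ∩ A ∧ p = p0)

/-- If `f` increases by at most `K * r` over a distance `r`, then a lower bound `c` on the difference
quotient of `f + lam * φ` yields the lower bound `(c - K) / lam` on that of `φ`. The new value `t`
of `φ` may be `⊤`, the old value `s` is finite. -/
lemma quotient_bound {f1 f0 lam s r K c : ℝ} {t : EReal} (hlam : 0 < lam) (ht : 0 ≤ t)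
    (hr : 0 < r) (hK : f1 - f0 ≤ K * r)
    (hc : (c : EReal) <
      ((f1 : EReal) + (lam : EReal) * t - ((f0 : EReal) + (lam : EReal) * (s : EReal)))
        * ((r⁻¹ : ℝ) : EReal)) :
    (((c - K) / lam : ℝ) : EReal) < (t - (s : EReal)) * ((r⁻¹ : ℝ) : EReal) := by
  induction t with
  | bot => simp at ht
  | top =>
    rw [EReal.top_sub_coe, EReal.top_mul_coe_of_pos (inv_pos.2 hr)]
    exact EReal.coe_lt_top _
  | coe t =>
    norm_cast at hc ⊢
    rw [← div_eq_mul_inv, lt_div_iff₀ hr] at hc ⊢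
    rw [div_mul_eq_mul_div, div_lt_iff₀ hlam]
    nlinarith

/-- sufficient condition for feasibility preservation, together with the bound
`λ_fp(C) ≤ L/a` on the parameter of feasibility preservation.  Lipschitz continuity of `f`
with constant `L` on the open set `V` is expressed by finiteness of `f` on `V` together with
the Lipschitz estimate. -/
theorem sufficient_condition_feasibility_preservation {X P : Type*}
    [MetricSpace X] [MetricSpace P]
    (A M : Set X) (hA : A.Nonempty) (hM : M.Nonempty) (p0 : P)
    (f : X → EReal) (hf_ne_bot : ∀ x, f x ≠ ⊥) (hf_dom : ∃ x, f x ≠ ⊤)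
    (hf_attains : ∃ x ∈ M ∩ A, ∀ y ∈ M ∩ A, f x ≤ f y)
    (φ : X → P → EReal) (hφ_nonneg : ∀ x p, 0 ≤ φ x p)
    (hφ_zero : ∀ x p, (φ x p = 0 ↔ p = p0 ∧ x ∈ M))
    (C : Set X) (hC : C.Nonempty) (hCA : C ⊆ A)
    (V : Set X) (hV : IsOpen V) (hCV : C ⊆ V)
    (L : ℝ) (hL : 0 ≤ L)
    (hf_fin : ∀ x ∈ V, f x ≠ ⊤)
    (hf_lip : ∀ x ∈ V, ∀ y ∈ V, f x ≤ f y + ((L * dist x y : ℝ) : EReal))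
    (a : ℝ) (ha : 0 < a)
    (hdesc : ∀ z : X × P, z ∈ ((C ×ˢ (univ : Set P)) ∩ {w : X × P | φ w.1 w.2 ≠ ⊤})
        \ ((M ∩ A) ×ˢ ({p0} : Set P)) →
      0 ≤ rsd (univ : Set P) (fun q => φ z.1 q) z.2 →
      rsd A (fun y => φ y z.2) z.1 ≤ ((-a : ℝ) : EReal)) :
    (∃ mu : ℝ, FeasPresFrom A M C p0 f φ mu) ∧
      sInf {mu : ℝ | FeasPresFrom A M C p0 f φ mu} ≤ L / a := by
  -- It suffices that every `mu > L / a` is an admissible threshold.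
  have key : ∀ mu : ℝ, L / a < mu → FeasPresFrom A M C p0 f φ mu := by
    intro mu hmu
    have hmu0 : 0 < mu := lt_of_le_of_lt (div_nonneg hL ha.le) hmu
    refine ⟨hmu0.le, fun lam hlam x hx p hF _ hrsd => ?_⟩
    have hlam0 : 0 < lam := hmu0.trans_le hlam
    have hLlam : L < lam * a := (div_lt_iff₀ ha).1 (hmu.trans_le hlam)
    by_contra hinf
    have hxV : x ∈ V := hCV hx
    have hφtop : φ x p ≠ ⊤ := by
      intro h
      apply hF
      rw [penFun, h, EReal.coe_mul_top_of_pos hlam0, EReal.add_top_of_ne_bot (hf_ne_bot x)]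
    have hφbot : φ x p ≠ ⊥ := fun h => by
      have := hφ_nonneg x p
      simp [h] at this
    obtain ⟨s, hs⟩ : ∃ s : ℝ, φ x p = (s : EReal) :=
      ⟨_, (EReal.coe_toReal hφtop hφbot).symm⟩
    have hfV : ∀ y ∈ V, ∃ u : ℝ, f y = (u : EReal) := fun y hy =>
      ⟨_, (EReal.coe_toReal (hf_fin y hy) (hf_ne_bot y)).symm⟩
    obtain ⟨f0, hf0⟩ := hfV x hxV
    rw [rsdPair, le_liminf_iff] at hrsd
    have hslice : 0 ≤ rsd (univ : Set P) (fun q => φ x q) p := by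
      rw [rsd, le_liminf_iff]
      intro b hb
      obtain ⟨e, hbe, he⟩ := EReal.lt_iff_exists_real_btwn.1 hb
      have he0 : e < 0 := by exact_mod_cast he
      have hev := hrsd ((lam * e : ℝ) : EReal) (by exact_mod_cast mul_neg_of_pos_of_neg hlam0 he0)
      have htend : Tendsto (fun q : P => (x, q)) (nhdsWithin p (univ \ {p}))
          (nhdsWithin (x, p) ((A ×ˢ (univ : Set P)) \ {(x, p)})) := by
        refine ContinuousWithinAt.tendsto_nhdsWithin (f := fun q : P => (x, q))
          (by fun_prop) ?_
        intro q hq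
        exact ⟨⟨hCA hx, mem_univ _⟩, fun h => hq.2 (congrArg Prod.snd h)⟩
      filter_upwards [htend.eventually hev, self_mem_nhdsWithin] with q hq hqp
      have hr : 0 < dist q p := dist_pos.2 hqp.2
      simp only [penFun, dist_self, zero_add, hf0, hs] at hq
      have := quotient_bound (K := 0) hlam0 (hφ_nonneg x q) hr (by simp) hq
      rw [sub_zero, mul_div_cancel_left₀ _ hlam0.ne'] at this
      simp only [hs]
      exact hbe.trans this
    have hle := hdesc (x, p) ⟨⟨⟨hx, mem_univ _⟩, hφtop⟩, fun h => hinf ⟨h.1, h.2⟩⟩ hslice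
    -- For such a `c`, the slope `(c - L) / lam` still exceeds `-a`, while `c < 0` is eventually
    -- a strict lower bound for the difference quotients of the penalty function.
    obtain ⟨c, hc1, hc0⟩ : ∃ c : ℝ, L - lam * a < c ∧ c < 0 := exists_between (by linarith)
    have hge : (((c - L) / lam : ℝ) : EReal) ≤ rsd A (fun y => φ y p) x := by
      refine le_liminf_of_le (by isBoundedDefault) ?_
      have hev := hrsd (c : EReal) (by exact_mod_cast hc0)
      have htend : Tendsto (fun y : X => (y, p)) (nhdsWithin x (A \ {x}))
          (nhdsWithin (x, p) ((A ×ˢ (univ : Set P)) \ {(x, p)})) := by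
        refine ContinuousWithinAt.tendsto_nhdsWithin (f := fun y : X => (y, p))
          (by fun_prop) ?_
        intro y hy
        exact ⟨⟨hy.1, mem_univ _⟩, fun h => hy.2 (congrArg Prod.fst h)⟩
      filter_upwards [htend.eventually hev, self_mem_nhdsWithin,
        mem_nhdsWithin_of_mem_nhds (hV.mem_nhds hxV)] with y hy hyx hyV
      have hr : 0 < dist y x := dist_pos.2 hyx.2
      obtain ⟨f1, hf1⟩ := hfV y hyV
      have hlip := hf_lip y hyV x hxV
      rw [hf1, hf0] at hlip
      norm_cast at hlip
      simp only [penFun, dist_self, add_zero, hf0, hf1, hs] at hy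
      have := quotient_bound (K := L) hlam0 (hφ_nonneg y p) hr (by linarith) hy
      simp only [hs]
      exact this.le
    have hfin : (c - L) / lam ≤ -a := by exact_mod_cast hge.trans hle
    rw [div_le_iff₀ hlam0] at hfin
    linarith
  refine ⟨⟨L / a + 1, key _ (by linarith)⟩, le_of_forall_gt_imp_ge_of_dense fun mu hmu => ?_⟩
  exact csInf_le ⟨0, fun _ h => h.1⟩ (key mu hmu)
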